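/- Let G = (V, E) be a strongly connected digraph with start vertex s, let r be a root (r = s or r marked), and let v, w be two vertices of T(r). Then there is a path from v to w in G if and only if there is a path from v to w in the auxiliary graph G_r. -/

import Mathlib

variable {V : Type*}

/-- `p` is a path from `u` to `w` in the digraph with edge set `E`:
a nonempty list of vertices starting at `u`, ending at `w`, with consecutive edges in `E`. -/
def IsPathFrom (E : Set (V × V)) (u w : V) (p : List V) : Prop :=
  p.head? = some u ∧ p.getLast? = some w ∧ p.Chain' (fun a b => (a, b) ∈ E)

/-- There is a path from `u` to `w` in the digraph with edge set `E`. -/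
def Reaches (E : Set (V × V)) (u w : V) : Prop :=
  ∃ p, IsPathFrom E u w p

/-- Every vertex has a path to every other vertex. -/
def StronglyConnected (E : Set (V × V)) : Prop :=
  ∀ u w : V, Reaches E u w

/-- `v` and `w` are 2-edge-connected: `v = w` or, for every edge `e`,
there are paths from `v` to `w` and from `w` to `v` avoiding `e`. -/
def TwoEdgeConn (E : Set (V × V)) (v w : V) : Prop :=
  v = w ∨ ∀ e ∈ E, Reaches (E \ {e}) v w ∧ Reaches (E \ {e}) w v

/-- `w` is 2-edge-connected from `v`: for every edge `e` there is a path
from `v` to `w` avoiding `e`. -/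
def TwoEdgeConnFrom (E : Set (V × V)) (v w : V) : Prop :=
  ∀ e ∈ E, Reaches (E \ {e}) v w

/-- `u` dominates `w` in the flow graph with start vertex `s`:
every path from `s` to `w` contains `u`. -/
def Dominates (E : Set (V × V)) (s u w : V) : Prop :=
  ∀ p, IsPathFrom E s w p → u ∈ p

/-- `(u, w)` is a bridge of the flow graph with start vertex `s`:
every path from `s` to `w` contains the edge `(u, w)`. -/
def IsBridge (E : Set (V × V)) (s u w : V) : Prop :=
  (u, w) ∈ E ∧ ∀ p, IsPathFrom E s w p → (u, w) ∈ p.zip p.tail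

/-- `w` is marked in the flow graph with start vertex `s`: some bridge ends at `w`. -/
def Marked (E : Set (V × V)) (s w : V) : Prop :=
  ∃ u, IsBridge E s u w

/-- The reverse digraph: every edge direction is reversed. -/
def reverseE (E : Set (V × V)) : Set (V × V) :=
  {e | (e.2, e.1) ∈ E}

/-- `u` and `w` are mutually reachable. -/
def MutualReach (E : Set (V × V)) (u w : V) : Prop :=
  Reaches E u w ∧ Reaches E w u

/-- The number of strongly connected components: the number of equivalence
classes of the mutual-reachability relation. -/
noncomputable def numSCC (E : Set (V × V)) : ℕ :=
  Nat.card (Quot (MutualReach E))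

/-- `e` is a strong bridge: removing it increases the number of strongly
connected components. -/
def IsStrongBridge (E : Set (V × V)) (e : V × V) : Prop :=
  e ∈ E ∧ numSCC E < numSCC (E \ {e})

/-- `d` is the immediate dominator of `w` in the flow graph with start vertex `s`:
`d` is a proper dominator of `w` dominated by every proper dominator of `w`. -/
def ImmDomIs (E : Set (V × V)) (s w d : V) : Prop :=
  Dominates E s d w ∧ d ≠ w ∧ ∀ x, Dominates E s x w → x ≠ w → Dominates E s x d

/-- `r` is the deepest marked dominator `r_v` of `v`: either `r` is a marked
dominator of `v` dominated by every marked dominator of `v`, or no marked vertex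
dominates `v` and `r = s`. -/
def DeepestMarkedDomIs (E : Set (V × V)) (s v r : V) : Prop :=
  (Marked E s r ∧ Dominates E s r v ∧
    ∀ x, Marked E s x → Dominates E s x v → Dominates E s x r)
  ∨ (r = s ∧ ∀ x, Marked E s x → ¬ Dominates E s x v)

/-- `T(r)`: the vertices whose deepest marked dominator is `r`. -/
def Tset (E : Set (V × V)) (s r : V) : Set V :=
  {v | DeepestMarkedDomIs E s v r}

/-- The roots of the decomposition of the dominator tree: `s` and the marked vertices. -/
def IsRoot (E : Set (V × V)) (s r : V) : Prop :=
  r = s ∨ Marked E s r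

/-- `z` is a marked child (in the dominator tree) of a boundary vertex of `T(r)`. -/
def MarkedChildOfBoundary (E : Set (V × V)) (s r z : V) : Prop :=
  Marked E s z ∧ ∃ x ∈ Tset E s r, ImmDomIs E s z x

/-- The vertex set `V_r` of the auxiliary graph `G_r` (with `dr` playing the role
of `d(r)` when `r ≠ s`): the ordinary vertices `T(r)`, the marked children of
boundary vertices of `T(r)`, and (if `r ≠ s`) the vertex `d(r)`. -/
def auxVerts (E : Set (V × V)) (s r dr : V) : Set V :=
  Tset E s r ∪ {z | MarkedChildOfBoundary E s r z} ∪ {x | r ≠ s ∧ x = dr}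

/-- The edge set `E_r` of the auxiliary graph `G_r` (with `dr` playing the role of
`d(r)` when `r ≠ s`): edges of `G` between ordinary vertices; the edge `(v, w)` for
each boundary vertex `v ∈ T(r)` and marked child `w` of `v`; the edge `(d(r), r)` if
`r ≠ s`; and the shortcut edges of types (a), (b), (c). -/
def auxEdges (E : Set (V × V)) (s r dr : V) : Set (V × V) :=
  {e | e ∈ E ∧ e.1 ∈ Tset E s r ∧ e.2 ∈ Tset E s r} ∪
  {e | e.1 ∈ Tset E s r ∧ Marked E s e.2 ∧ ImmDomIs E s e.2 e.1} ∪
  {e | r ≠ s ∧ e = (dr, r)} ∪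
  {e | ∃ u v, (u, v) ∈ E ∧ u ∈ Tset E s r ∧ ¬ Dominates E s r v ∧ e = (u, dr)} ∪
  {e | ∃ u v z, (u, v) ∈ E ∧ v ∈ Tset E s r ∧ Dominates E s r u ∧ u ∉ Tset E s r ∧
      MarkedChildOfBoundary E s r z ∧ Dominates E s z u ∧ e = (z, v)} ∪
  {e | ∃ u v z, (u, v) ∈ E ∧ Dominates E s r u ∧ u ∉ Tset E s r ∧ ¬ Dominates E s r v ∧
      MarkedChildOfBoundary E s r z ∧ Dominates E s z u ∧ e = (z, dr)}

open Relation

theorem path_snoc {E : Set (V × V)} {s x y : V} {p : List V} (hp : IsPathFrom E s x p)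
    (h : (x, y) ∈ E) : IsPathFrom E s y (p ++ [y]) := by
  obtain ⟨h1, h2, h3⟩ := hp
  refine ⟨by simp [h1], by simp, ?_⟩
  apply List.isChain_append.2
  refine ⟨h3, by simp, ?_⟩
  intro a ha b hb
  simp only [h2, Option.mem_def, Option.some.injEq, List.head?_cons] at ha hb
  subst ha; subst hb; exact h

theorem path_nil (E : Set (V × V)) (s : V) : IsPathFrom E s s [s] :=
  ⟨rfl, rfl, List.isChain_singleton _⟩

/-- induction on paths -/
theorem path_ind {E : Set (V × V)} {s : V} (P : V → List V → Prop)
    (h0 : P s [s])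
    (hs : ∀ x y p, IsPathFrom E s x p → (x, y) ∈ E → P x p → P y (p ++ [y])) :
    ∀ p w, IsPathFrom E s w p → P w p := by
  intro p
  induction p using List.reverseRecOn with
  | nil => intro w h; simp [IsPathFrom] at h
  | append_singleton q a ih =>
    intro w hw
    obtain ⟨h1, h2, h3⟩ := hw
    have haw : a = w := by simpa using h2
    subst haw
    rcases List.eq_nil_or_concat q with rfl | ⟨q', b, rfl⟩
    · have : a = s := by simpa using h1
      subst this; exact h0
    · rw [List.concat_eq_append] at *
      have h3' := List.isChain_append.1 h3
      have hq : IsPathFrom E s b (q' ++ [b]) := by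
        refine ⟨?_, by simp, h3'.1⟩
        cases q' <;> simpa using h1
      exact hs b a _ hq (h3'.2.2 b (by simp) a (by simp)) (ih b hq)

theorem reaches_iff {E : Set (V × V)} {u w : V} :
    Reaches E u w ↔ ReflTransGen (fun a b => (a, b) ∈ E) u w := by
  constructor
  · rintro ⟨p, hp⟩
    exact path_ind (fun w _ => ReflTransGen (fun a b => (a, b) ∈ E) u w) .refl
      (fun x y p _ h ih => ih.tail h) p w hp
  · intro h
    induction h with
    | refl => exact ⟨_, path_nil E u⟩
    | tail _ h ih => obtain ⟨p, hp⟩ := ih; exact ⟨_, path_snoc hp h⟩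

theorem ndom_start {E : Set (V × V)} {s b : V} (h : b ≠ s) : ¬ Dominates E s b s :=
  fun H => h (by simpa using H _ (path_nil E s))

theorem ndom_step {E : Set (V × V)} {s b x y : V} (h : ¬ Dominates E s b x) (hE : (x, y) ∈ E)
    (hy : b ≠ y) : ¬ Dominates E s b y := by
  intro H
  apply h
  intro p hp
  have := H _ (path_snoc hp hE)
  simpa [hy] using this

theorem dom_self (E : Set (V × V)) (s b : V) : Dominates E s b b := by
  rintro p ⟨-, h, -⟩
  exact List.mem_of_getLast? h

theorem dom_start (E : Set (V × V)) (s b : V) : Dominates E s s b := by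
  rintro p ⟨h, -, -⟩
  exact List.mem_of_head? h

theorem ndom_ind {E : Set (V × V)} {s b : V} (P : V → Prop) (h0 : b ≠ s → P s)
    (hs : ∀ x y, (x, y) ∈ E → ¬ Dominates E s b y → P x → P y)
    {w : V} (hw : ¬ Dominates E s b w) : P w := by
  simp only [Dominates, not_forall] at hw
  obtain ⟨p, hp, hb⟩ := hw
  refine path_ind (fun w p => b ∉ p → P w) ?_ ?_ p w hp hb
  · intro h; exact h0 (by simpa using h)
  · intro x y p hp hE ih hb
    simp only [List.mem_append, List.mem_singleton, not_or] at hb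
    refine hs x y hE ?_ (ih hb.1)
    intro H
    have := H _ (path_snoc hp hE)
    simp [hb] at this

theorem dom_trans {E : Set (V × V)} {s a b c : V} (h1 : Dominates E s a b)
    (h2 : Dominates E s b c) : Dominates E s a c := by
  by_contra h
  revert h2
  refine ndom_ind (fun c => ¬ Dominates E s b c) ?_ ?_ h
  · intro ha
    apply ndom_start
    rintro rfl
    exact ndom_start ha h1
  · intro x y hE hy ih
    refine ndom_step ih hE ?_
    rintro rfl
    exact hy h1

theorem dom_antisymm {E : Set (V × V)} (hsc : StronglyConnected E) {s a b : V}
    (h1 : Dominates E s a b) (h2 : Dominates E s b a) : a = b := by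
  by_contra hab
  have key : ∀ x, ReflTransGen (fun a b => (a, b) ∈ E) s x →
      ¬ Dominates E s a x ∧ ¬ Dominates E s b x := by
    intro x hx
    induction hx with
    | refl =>
      constructor
      · refine ndom_start ?_
        rintro rfl; exact ndom_start (Ne.symm hab) h2
      · refine ndom_start ?_
        rintro rfl; exact ndom_start hab h1
    | tail _ hE ih =>
      constructor
      · refine ndom_step ih.1 hE ?_
        rintro rfl; exact ndom_step ih.2 hE (Ne.symm hab) h2
      · refine ndom_step ih.2 hE ?_
        rintro rfl; exact ndom_step ih.1 hE hab h1
  exact (key a (reaches_iff.1 (hsc s a))).1 (dom_self E s a)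

theorem dom_linear {E : Set (V × V)} (hsc : StronglyConnected E) {s a b x : V}
    (h1 : Dominates E s a x) (h2 : Dominates E s b x) :
    Dominates E s a b ∨ Dominates E s b a := by
  by_contra h
  push Not at h
  have hab : a ≠ b := by rintro rfl; exact h.1 (dom_self E s a)
  have key : ∀ x, ReflTransGen (fun a b => (a, b) ∈ E) s x →
      ¬ Dominates E s a x ∨ ¬ Dominates E s b x := by
    intro x hx
    induction hx with
    | refl =>
      by_cases ha : a = s
      · right; exact ndom_start (fun hb => hab (ha.trans hb.symm))
      · left; exact ndom_start ha
    | @tail y z _ hE ih =>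
      by_cases ha : a = z
      · right; rw [← ha]; exact h.2
      by_cases hb : b = z
      · left; rw [← hb]; exact h.1
      exact ih.imp (fun i => ndom_step i hE ha) (fun i => ndom_step i hE hb)
  rcases key x (reaches_iff.1 (hsc s x)) with h | h
  · exact h h1
  · exact h h2

theorem zip_tail_aux (u z : V) : ∀ (p : List V) (x : V), z ∉ p → p.getLast? = some x →
    (u, z) ∈ (p ++ [z]).zip (p ++ [z]).tail → u = x := by
  intro p
  induction p with
  | nil => intro x _ h; simp at h
  | cons a t ih =>
    intro x hz hl hm
    cases t with
    | nil => simp at hl hm; exact hm.trans hl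
    | cons b t =>
      have hz' : z ∉ b :: t := fun h => hz (List.mem_cons_of_mem _ h)
      have hb : z ≠ b := fun h => hz' (by simp [h])
      simp only [List.cons_append, List.tail_cons, List.zip_cons_cons, List.mem_cons,
        Prod.mk.injEq, hb, and_false, false_or] at hm
      refine ih x hz' (by simpa using hl) ?_
      simpa using hm

theorem marked_ne_start {E : Set (V × V)} {s z : V} (h : Marked E s z) : z ≠ s := by
  rintro rfl
  obtain ⟨u, -, h⟩ := h
  simpa using h _ (path_nil E z)

theorem marked_spec {E : Set (V × V)} (hsc : StronglyConnected E) {s z : V}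
    (h : Marked E s z) : ∃ u, ImmDomIs E s z u ∧
      ∀ x, (x, z) ∈ E → ¬ Dominates E s z x → x = u := by
  have hzs := marked_ne_start h
  obtain ⟨u, hE, hb⟩ := h
  have huniq : ∀ x, (x, z) ∈ E → ¬ Dominates E s z x → x = u := by
    intro x hx hd
    simp only [Dominates, not_forall] at hd
    obtain ⟨p, hp, hz⟩ := hd
    exact (zip_tail_aux u z p x hz hp.2.1 (hb _ (path_snoc hp hx))).symm
  have hex : ¬ Dominates E s z u := by
    intro hu
    have key : ∀ x, ReflTransGen (fun a b => (a, b) ∈ E) s x → ¬ Dominates E s z x := by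
      intro x hx
      induction hx with
      | refl => exact ndom_start hzs
      | tail _ hE' ih =>
        refine ndom_step ih hE' ?_
        rintro rfl
        have := huniq _ hE' ih
        subst this
        exact ih hu
    exact key u (reaches_iff.1 (hsc s u)) hu
  refine ⟨u, ⟨?_, ?_, ?_⟩, huniq⟩
  · intro p hp
    exact (List.of_mem_zip (hb p hp)).1
  · rintro rfl; exact hex (dom_self E s u)
  · intro t ht htz
    by_contra h
    exact ndom_step h hE htz ht

theorem dom_of_T {E : Set (V × V)} {s r x : V} (h : x ∈ Tset E s r) : Dominates E s r x := by
  rcases h with h | ⟨rfl, -⟩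
  · exact h.2.1
  · exact dom_start E r x

theorem T_marked {E : Set (V × V)} {s r x t : V} (h : x ∈ Tset E s r) (ht : Marked E s t)
    (hd : Dominates E s t x) : Dominates E s t r := by
  rcases h with h | ⟨rfl, h⟩
  · exact h.2.2 t ht hd
  · exact absurd hd (h t ht)

theorem T_intro {E : Set (V × V)} {s r x : V} (hr : IsRoot E s r) (h : Dominates E s r x)
    (H : ∀ t, Marked E s t → Dominates E s t x → Dominates E s t r) : x ∈ Tset E s r := by
  rcases hr with rfl | hr
  · right
    exact ⟨rfl, fun t ht hd => ndom_start (marked_ne_start ht) (H t ht hd)⟩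
  · left; exact ⟨hr, h, H⟩

theorem dom_wf [Fintype V] {E : Set (V × V)} (hsc : StronglyConnected E) (s : V) :
    WellFounded (fun a b => Dominates E s a b ∧ a ≠ b) := by
  haveI : IsTrans V (fun a b => Dominates E s a b ∧ a ≠ b) := ⟨by
    rintro a b c ⟨h1, h2⟩ ⟨h3, h4⟩
    refine ⟨dom_trans h1 h3, ?_⟩
    rintro rfl
    exact h2 (dom_antisymm hsc h1 h3)⟩
  haveI : Std.Irrefl (fun a b : V => Dominates E s a b ∧ a ≠ b) := ⟨fun a h => h.2 rfl⟩
  exact Finite.wellFounded_of_trans_of_irrefl _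

theorem exists_child [Fintype V] {E : Set (V × V)} (hsc : StronglyConnected E) {s r x : V}
    (hr : IsRoot E s r) (hd : Dominates E s r x) (hx : x ∉ Tset E s r) :
    ∃ z, MarkedChildOfBoundary E s r z ∧ Dominates E s z x := by
  have hne : ∃ t, Marked E s t ∧ Dominates E s t x ∧ ¬ Dominates E s t r := by
    by_contra h
    push Not at h
    exact hx (T_intro hr hd h)
  obtain ⟨z, ⟨hzm, hzx, hzr⟩, hmin⟩ := (dom_wf hsc s).has_min
    {t | Marked E s t ∧ Dominates E s t x ∧ ¬ Dominates E s t r} hne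
  obtain ⟨u, hu, -⟩ := marked_spec hsc hzm
  refine ⟨z, ⟨hzm, u, ?_, hu⟩, hzx⟩
  have hrz : Dominates E s r z := (dom_linear hsc hd hzx).resolve_right hzr
  have hrz' : r ≠ z := by rintro rfl; exact hzr (dom_self E s r)
  refine T_intro hr (hu.2.2 r hrz hrz') ?_
  intro t ht htu
  by_contra htr
  have htz := dom_trans htu hu.1
  refine hmin t ⟨ht, dom_trans htz hzx, htr⟩ ⟨htz, ?_⟩
  rintro rfl
  exact hu.2.1 (dom_antisymm hsc hu.1 htu)

theorem child_aux {E : Set (V × V)} (hsc : StronglyConnected E) {s r z z' : V}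
    (h : MarkedChildOfBoundary E s r z) (h' : MarkedChildOfBoundary E s r z')
    (hd : Dominates E s z z') : z = z' := by
  by_contra hne
  obtain ⟨hm, x, hx, hi⟩ := h
  obtain ⟨hm', x', hx', hi'⟩ := h'
  have h1 := T_marked hx' hm (hi'.2.2 z hd hne)
  have h2 := dom_of_T hx
  have h3 : z = x := dom_antisymm hsc (dom_trans h1 h2) hi.1
  exact hi.2.1 h3.symm

theorem child_unique {E : Set (V × V)} (hsc : StronglyConnected E) {s r z z' x : V}
    (h : MarkedChildOfBoundary E s r z) (h' : MarkedChildOfBoundary E s r z')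
    (hd : Dominates E s z x) (hd' : Dominates E s z' x) : z = z' := by
  rcases dom_linear hsc hd hd' with H | H
  · exact child_aux hsc h h' H
  · exact (child_aux hsc h' h H).symm

/-- entering the subtree of a marked child is only possible along its bridge -/
theorem child_enter {E : Set (V × V)} (hsc : StronglyConnected E) {s r z x y : V}
    (h : MarkedChildOfBoundary E s r z) (hE : (x, y) ∈ E) (hy : Dominates E s z y)
    (hx : ¬ Dominates E s z x) : y = z ∧ x ∈ Tset E s r ∧ ImmDomIs E s z x := by
  have hyz : z = y := by
    by_contra hne
    exact ndom_step hx hE hne hy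
  subst hyz
  obtain ⟨hm, x', hx', hi'⟩ := h
  obtain ⟨u, hu, huniq⟩ := marked_spec hsc hm
  have hxu := huniq x hE hx
  subst hxu
  have : x = x' := dom_antisymm hsc (hi'.2.2 x hu.1 hu.2.1) (hu.2.2 x' hi'.1 hi'.2.1)
  subst this
  exact ⟨rfl, hx', hu⟩

theorem child_not_dom_T {E : Set (V × V)} (hsc : StronglyConnected E) {s r z x : V}
    (h : MarkedChildOfBoundary E s r z) (hx : x ∈ Tset E s r) : ¬ Dominates E s z x := by
  intro hd
  obtain ⟨hm, y, hy, hi⟩ := h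
  have h1 := T_marked hx hm hd
  exact hi.2.1 (dom_antisymm hsc (dom_trans h1 (dom_of_T hy)) hi.1).symm

/-- Let `r` be a root and `v, w ∈ T(r)`. Then there is a path from `v` to `w` in `G`
if and only if there is a path from `v` to `w` in the auxiliary graph `G_r`. -/
theorem aux_graph_path_correspondence
    {V : Type*} [Fintype V] (E : Set (V × V)) (s : V)
    (hsc : StronglyConnected E) (r dr v w : V)
    (hr : IsRoot E s r) (hdr : Marked E s r → ImmDomIs E s r dr)
    (hv : v ∈ Tset E s r) (hw : w ∈ Tset E s r) :
    Reaches E v w ↔ Reaches (auxEdges E s r dr) v w := by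
  refine ⟨fun h => ?_, fun _ => hsc v w⟩
  rw [reaches_iff] at h ⊢
  have key : ∀ x, ReflTransGen (fun a b => (a, b) ∈ E) v x → ∃ a,
      ReflTransGen (fun a b => (a, b) ∈ auxEdges E s r dr) v a ∧
      ((x ∈ Tset E s r ∧ a = x) ∨
       (Dominates E s r x ∧ x ∉ Tset E s r ∧ MarkedChildOfBoundary E s r a ∧ Dominates E s a x) ∨
       (¬ Dominates E s r x ∧ a = dr)) := by
    intro x hx
    induction hx with
    | refl => exact ⟨v, .refl, Or.inl ⟨hv, rfl⟩⟩
    | @tail x y _ hE ih =>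
      obtain ⟨a, ha, ih⟩ := ih
      by_cases hyr : Dominates E s r y
      · by_cases hxr : Dominates E s r x
        · by_cases hyT : y ∈ Tset E s r
          · refine ⟨y, ha.tail ?_, Or.inl ⟨hyT, rfl⟩⟩
            rcases ih with ⟨hxT, rfl⟩ | ⟨h1, h2, h3, h4⟩ | ⟨h, -⟩
            · exact .inl (.inl (.inl (.inl (.inl ⟨hE, hxT, hyT⟩))))
            · exact .inl (.inr ⟨x, y, a, hE, hyT, h1, h2, h3, h4, rfl⟩)
            · exact absurd hxr h
          · obtain ⟨z, hz, hzy⟩ := exists_child hsc hr hyr hyT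
            refine ⟨z, ?_, Or.inr (Or.inl ⟨hyr, hyT, hz, hzy⟩)⟩
            rcases ih with ⟨hxT, rfl⟩ | ⟨h1, h2, h3, h4⟩ | ⟨h, -⟩
            · refine ha.tail ?_
              obtain ⟨-, h1, h2⟩ := child_enter hsc hz hE hzy (child_not_dom_T hsc hz hxT)
              exact .inl (.inl (.inl (.inl (.inr ⟨hxT, hz.1, h2⟩))))
            · by_cases hzx : Dominates E s z x
              · rw [child_unique hsc hz h3 hzx h4]; exact ha
              · exact absurd (child_enter hsc hz hE hzy hzx).2.1 h2
            · exact absurd hxr h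
        · have hry : r = y := by
            by_contra hne
            exact ndom_step hxr hE hne hyr
          subst hry
          have hrs : r ≠ s := by rintro rfl; exact hxr (dom_start E r x)
          refine ⟨r, ?_, Or.inl ⟨T_intro hr hyr (fun _ _ h => h), rfl⟩⟩
          rcases ih with ⟨hxT, rfl⟩ | ⟨h1, -⟩ | ⟨h, rfl⟩
          · exact absurd (dom_of_T hxT) hxr
          · exact absurd h1 hxr
          · exact ha.tail (.inl (.inl (.inl (.inr ⟨hrs, rfl⟩))))
      · refine ⟨dr, ?_, Or.inr (Or.inr ⟨hyr, rfl⟩)⟩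
        rcases ih with ⟨hxT, rfl⟩ | ⟨h1, h2, h3, h4⟩ | ⟨h, rfl⟩
        · exact ha.tail (.inl (.inl (.inr ⟨a, y, hE, hxT, hyr, rfl⟩)))
        · exact ha.tail (.inr ⟨x, y, a, hE, h1, h2, hyr, h3, h4, rfl⟩)
        · exact ha
  obtain ⟨a, ha, h | h | h⟩ := key w h
  · rw [← h.2]; exact ha
  · exact absurd hw h.2.1
  · exact absurd (dom_of_T hw) h.1
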